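/- Let ≺ be a linear order on the natural numbers. Let i_1, …, i_k and j_1, …, j_k be tuples of pairwise distinct natural numbers with i_1 ≺ i_2 ≺ ⋯ ≺ i_k and j_1 ≺ j_2 ≺ ⋯ ≺ j_k, such that E i_n i_m ↔ E j_n j_m for all 1 ≤ n, m ≤ k. Let B and B' be the Boolean subalgebras of Set I generated by {u i_1, …, u i_k} and {u j_1, …, u j_k} respectively. Order the atoms of B as follows: first the atoms {(min(i_n,i_m), max(i_n,i_m))} = u i_n ∩ u i_m (for position pairs n < m with E i_n i_m), ordered among themselves by the lexicographic order on the position pairs (n,m); above all of these, the atoms u i_n \ (⋃ of u i_ℓ over ℓ ≠ n), ordered by the position n; and greatest of all, the atom I \ (u i_1 ∪ ⋯ ∪ u i_k). Let ⊑ be the natural order on B induced by this linear order on the atoms of B, and let ⊑' be the order on B' defined analogously from the tuple j_1, …, j_k. Then there is an isomorphism of Boolean algebras g : B → B' with g (u i_ℓ) = u j_ℓ for all ℓ, and g is additionally an order isomorphism: for all x, y ∈ B, x ⊑ y if and only if g x ⊑' g y. -/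

import Mathlib

/-- The index set `I = {(n,m) : ℕ × ℕ | n ≤ m}`. -/
def I : Set (ℕ × ℕ) := {p | p.1 ≤ p.2}

/-- The element `u n = {(n,m) | n ≤ m} ∪ {(m,n) | m < n ∧ E m n}` of the Boolean algebra `Set I`. -/
def u (E : ℕ → ℕ → Prop) (n : ℕ) : Set I :=
  {p : I | (p.val.1 = n ∧ n ≤ p.val.2) ∨ (p.val.2 = n ∧ p.val.1 < n ∧ E p.val.1 n)}

/-- A Boolean subalgebra of a Boolean algebra, i.e. a subset containing `⊥` and `⊤` and
closed under `⊓`, `⊔`, and complement. -/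
def IsBoolSubalg {L : Type*} [BooleanAlgebra L] (B : Set L) : Prop :=
  ⊥ ∈ B ∧ ⊤ ∈ B ∧ (∀ x ∈ B, ∀ y ∈ B, x ⊓ y ∈ B) ∧ (∀ x ∈ B, ∀ y ∈ B, x ⊔ y ∈ B) ∧
    ∀ x ∈ B, xᶜ ∈ B

/-- The Boolean subalgebra generated by a set: the smallest Boolean subalgebra containing it. -/
def boolGen {L : Type*} [BooleanAlgebra L] (S : Set L) : Set L :=
  ⋂₀ {B | IsBoolSubalg B ∧ S ⊆ B}

/-- `a` is an atom of the Boolean subalgebra `B`. -/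
def IsAtomOfSet {L : Type*} [BooleanAlgebra L] (B : Set L) (a : L) : Prop :=
  a ∈ B ∧ a ≠ ⊥ ∧ ∀ b ∈ B, b ≤ a → b = ⊥ ∨ b = a

/-- The natural order on a (finite) Boolean subalgebra `B` induced by a linear order `r'` on the
set of atoms of `B`: `x ⊑ y` iff `x = y` or the `r'`-greatest atom of `B` lying below exactly
one of `x` and `y` lies below `y` (colexicographic order on sets of atoms). -/
def natOrderOn {A : Type*} [BooleanAlgebra A] (B : Set A) (r' : A → A → Prop) (x y : A) : Prop :=
  x = y ∨ ∃ a, IsAtomOfSet B a ∧ a ≤ y ∧ ¬ a ≤ x ∧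
    ∀ b, IsAtomOfSet B b → ¬ (b ≤ x ↔ b ≤ y) → r' b a

/-- Keys indexing the atoms of the subalgebra generated by `u (i 1), …, u (i k)`:
`Sum.inl (n, m)` stands for the atom `u (i n) ∩ u (i m) = {(i n, i m)}`,
`Sum.inr (Sum.inl n)` for the atom `u (i n) \ (⋃ ℓ ≠ n, u (i ℓ))`, and
`Sum.inr (Sum.inr _)` for the atom `I \ (u (i 1) ∪ ⋯ ∪ u (i k))`. -/
def keyAtom (E : ℕ → ℕ → Prop) {k : ℕ} (i : Fin k → ℕ) :
    (Fin k × Fin k) ⊕ (Fin k ⊕ Unit) → Set I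
  | Sum.inl p => u E (i p.1) ∩ u E (i p.2)
  | Sum.inr (Sum.inl n) => u E (i n) \ ⋃ ℓ, ⋃ (_ : ℓ ≠ n), u E (i ℓ)
  | Sum.inr (Sum.inr _) => (⋃ ℓ, u E (i ℓ))ᶜ

/-- A key is valid if it indexes an actual atom: for `Sum.inl (n, m)` this requires `n < m`
(as positions) and `E (i n) (i m)`. -/
def keyValid (E : ℕ → ℕ → Prop) {k : ℕ} (i : Fin k → ℕ) :
    (Fin k × Fin k) ⊕ (Fin k ⊕ Unit) → Prop
  | Sum.inl p => p.1 < p.2 ∧ E (i p.1) (i p.2)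
  | Sum.inr _ => True

/-- The order on the keys: first the singleton atoms, ordered lexicographically by their pair
of positions; then the atoms `u (i n) \ (⋃ ℓ ≠ n, u (i ℓ))`, ordered by the position `n`; and
greatest of all the atom `I \ (u (i 1) ∪ ⋯ ∪ u (i k))`. -/
def keyLE {k : ℕ} : (Fin k × Fin k) ⊕ (Fin k ⊕ Unit) → (Fin k × Fin k) ⊕ (Fin k ⊕ Unit) → Prop
  | Sum.inl p, Sum.inl q => p.1 < q.1 ∨ (p.1 = q.1 ∧ p.2 ≤ q.2)
  | Sum.inl _, Sum.inr _ => True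
  | Sum.inr _, Sum.inl _ => False
  | Sum.inr (Sum.inl n), Sum.inr (Sum.inl n') => n ≤ n'
  | Sum.inr (Sum.inl _), Sum.inr (Sum.inr _) => True
  | Sum.inr (Sum.inr _), Sum.inr (Sum.inl _) => False
  | Sum.inr (Sum.inr _), Sum.inr (Sum.inr _) => True

/-- The induced linear order on the atoms of the subalgebra generated by
`u (i 1), …, u (i k)`, transported from the order on the valid keys. -/
def atomRel (E : ℕ → ℕ → Prop) {k : ℕ} (i : Fin k → ℕ) : Set I → Set I → Prop := fun a b =>
  ∃ p q, keyValid E i p ∧ keyValid E i q ∧ keyAtom E i p = a ∧ keyAtom E i q = b ∧ keyLE p q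

/-!
Every set generated by `u (i 1), …, u (i k)` is a union of fibres of the map sending a point `p`
of `I` to its trace, the set of positions `ℓ` with `p ∈ u (i ℓ)`. A point `(a, b)` lies outside
all `u n` other than `u a` and `u b`, and in both of these only if `a = b` or `E a b`. Hence the
traces that occur are the sets with at most one element and the pairs of positions joined by an
edge, and these depend only on the graph induced on the positions. Choosing for each point a point
with the same trace on the other tuple gives maps `f, f' : I → I`; taking preimages
under `f` and under `f'` are mutually inverse homomorphisms between the two subalgebras. They match
the atoms with the same key, and therefore the natural orders.
-/

section BooleanSubalgebras

variable {L L' : Type*} [BooleanAlgebra L] [BooleanAlgebra L']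

theorem boolGen_eq_closure (S : Set L) : boolGen S = BooleanSubalgebra.closure S := by
  refine Set.Subset.antisymm (Set.sInter_subset_of_mem ⟨?_, BooleanSubalgebra.subset_closure⟩) ?_
  · exact ⟨BooleanSubalgebra.bot_mem, BooleanSubalgebra.top_mem,
      fun _ hx _ hy => BooleanSubalgebra.inf_mem hx hy,
      fun _ hx _ hy => BooleanSubalgebra.sup_mem hx hy,
      fun _ hx => BooleanSubalgebra.compl_mem hx⟩
  · rintro x hx B ⟨⟨hbot, -, hinf, hsup, hcompl⟩, hS⟩
    let A : BooleanSubalgebra L :=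
      { carrier := B
        supClosed' := fun x hx y hy => hsup x hx y hy
        infClosed' := fun x hx y hy => hinf x hx y hy
        compl_mem' := fun {x} hx => hcompl x hx
        bot_mem' := hbot }
    exact BooleanSubalgebra.closure_le (L := A) |>.2 hS hx

theorem bot_mem_boolGen (S : Set L) : ⊥ ∈ boolGen S := by
  rw [boolGen_eq_closure]
  exact BooleanSubalgebra.bot_mem

theorem image_boolGen (φ : BoundedLatticeHom L L') (S : Set L) :
    φ '' boolGen S = boolGen (φ '' S) := by
  simp only [boolGen_eq_closure, ← BooleanSubalgebra.coe_map, SetLike.coe_set_eq]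
  refine le_antisymm ?_ (BooleanSubalgebra.closure_le.2
    (Set.image_mono BooleanSubalgebra.subset_closure))
  rw [BooleanSubalgebra.map_le_iff_le_comap, BooleanSubalgebra.closure_le]
  exact fun x hx => BooleanSubalgebra.mem_closure_of_mem (Set.mem_image_of_mem φ hx)

theorem leftInvOn_boolGen {φ : BoundedLatticeHom L L'} {ψ : BoundedLatticeHom L' L} {S : Set L}
    (h : Set.LeftInvOn ψ φ S) : Set.LeftInvOn ψ φ (boolGen S) := by
  intro x hx
  rw [boolGen_eq_closure] at hx
  induction hx using BooleanSubalgebra.closure_bot_sup_induction with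
  | mem x hx => exact h hx
  | bot => simp only [map_bot]
  | sup x _ y _ ihx ihy => simp only [map_sup, ihx, ihy]
  | compl x _ ih => simp only [map_compl', ih]

variable {B : Set L} {g : L → L'}

theorem isAtomOfSet_image_iff (hg : ∀ x ∈ B, ∀ y ∈ B, g x ≤ g y ↔ x ≤ y) (hbot : ⊥ ∈ B)
    (hg_bot : g ⊥ = ⊥) {a : L} (ha : a ∈ B) : IsAtomOfSet (g '' B) (g a) ↔ IsAtomOfSet B a := by
  have hinj : ∀ x ∈ B, ∀ y ∈ B, g x = g y ↔ x = y := fun x hx y hy => by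
    simp only [le_antisymm_iff, hg x hx y hy, hg y hy x hx]
  have eq_bot_iff : ∀ x ∈ B, g x = ⊥ ↔ x = ⊥ := fun x hx => by
    rw [← hg_bot, hinj x hx ⊥ hbot]
  simp only [IsAtomOfSet, Set.forall_mem_image, Set.mem_image_of_mem g ha, ha, ne_eq,
    eq_bot_iff a ha, true_and]
  refine and_congr_right fun _ => forall₂_congr fun b hb => ?_
  rw [hg b hb a ha, eq_bot_iff b hb, hinj b hb a ha]

theorem natOrderOn_image_iff {r : L → L → Prop} {r' : L' → L' → Prop}
    (hg : ∀ x ∈ B, ∀ y ∈ B, g x ≤ g y ↔ x ≤ y) (hbot : ⊥ ∈ B) (hg_bot : g ⊥ = ⊥)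
    (hr : ∀ a ∈ B, ∀ b ∈ B, r' (g a) (g b) ↔ r a b) {x y : L} (hx : x ∈ B) (hy : y ∈ B) :
    natOrderOn (g '' B) r' (g x) (g y) ↔ natOrderOn B r x y := by
  have exists_atom {P : L' → Prop} : (∃ a, IsAtomOfSet (g '' B) a ∧ P a) ↔
      ∃ a, IsAtomOfSet B a ∧ P (g a) := by
    constructor
    · rintro ⟨_, hatom, hP⟩
      obtain ⟨a, ha, rfl⟩ := hatom.1
      exact ⟨a, (isAtomOfSet_image_iff hg hbot hg_bot ha).1 hatom, hP⟩
    · rintro ⟨a, hatom, hP⟩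
      exact ⟨g a, (isAtomOfSet_image_iff hg hbot hg_bot hatom.1).2 hatom, hP⟩
  have forall_atom {P : L' → Prop} : (∀ a, IsAtomOfSet (g '' B) a → P a) ↔
      ∀ a, IsAtomOfSet B a → P (g a) := by
    simpa only [not_exists, not_and, not_not] using (exists_atom (P := fun a => ¬ P a)).not
  unfold natOrderOn
  rw [exists_atom]
  refine or_congr ?_ (exists_congr fun a => and_congr_right fun ha => ?_)
  · simp only [le_antisymm_iff, hg x hx y hy, hg y hy x hx]
  · rw [forall_atom, hg a ha.1 y hy, hg a ha.1 x hx]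
    refine and_congr_right fun _ => and_congr_right fun _ => forall₂_congr fun b hb => ?_
    rw [hg b hb.1 x hx, hg b hb.1 y hy, hr b hb.1 a ha.1]

end BooleanSubalgebras

section Traces

variable {E E' : ℕ → ℕ → Prop}

theorem mem_u_iff {n : ℕ} {p : I} :
    p ∈ u E n ↔ p.val.1 = n ∨ (p.val.2 = n ∧ p.val.1 < n ∧ E p.val.1 n) := by
  have hp : p.val.1 ≤ p.val.2 := p.2
  refine or_congr_left (and_iff_left_of_imp ?_)
  rintro rfl
  exact hp

theorem eq_or_eq_of_mem_u {n : ℕ} {p : I} (hp : p ∈ u E n) : n = p.val.1 ∨ n = p.val.2 :=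
  (mem_u_iff.1 hp).imp Eq.symm fun h => h.1.symm

theorem adj_of_mem_u_of_mem_u (hsym : ∀ a b, E a b → E b a) {m n : ℕ} (hmn : m ≠ n) {p : I}
    (hm : p ∈ u E m) (hn : p ∈ u E n) : E m n := by
  rcases mem_u_iff.1 hm with rfl | ⟨rfl, -, hm⟩ <;> rcases mem_u_iff.1 hn with rfl | ⟨rfl, -, hn⟩
  · exact absurd rfl hmn
  · exact hn
  · exact hsym _ _ hm
  · exact absurd rfl hmn

theorem exists_forall_mem_u_iff_of_adj (hsym : ∀ a b, E a b → E b a) {m n : ℕ} (h : E m n) :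
    ∃ p : I, ∀ l, p ∈ u E l ↔ l = m ∨ l = n := by
  wlog hmn : m ≤ n generalizing m n
  · simpa only [or_comm] using this (hsym _ _ h) (le_of_not_ge hmn)
  refine ⟨⟨(m, n), hmn⟩, fun l => ?_⟩
  rw [mem_u_iff]
  grind

variable {ι : Type*}

/-- The trace of a point of `I` on the tuple `i`: the set of positions `l` such that the point lies
in `u (i l)`. It determines which members of the subalgebra generated by the `u (i l)` contain the
point. -/
def uTrace (E : ℕ → ℕ → Prop) (i : ι → ℕ) (p : I) : Set ι := {l | p ∈ u E (i l)}

variable {i j : ι → ℕ}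

theorem uTrace_subsingleton_or_eq_pair (hsym : ∀ a b, E a b → E b a) (hi : Function.Injective i)
    (p : I) :
    (uTrace E i p).Subsingleton ∨ ∃ m n, E (i m) (i n) ∧ uTrace E i p = {m, n} := by
  refine (uTrace E i p).subsingleton_or_nontrivial.imp_right ?_
  rintro ⟨m, hm, n, hn, hmn⟩
  have hne : i m ≠ i n := hi.ne hmn
  refine ⟨m, n, adj_of_mem_u_of_mem_u hsym hne hm hn, Set.Subset.antisymm (fun l hl => ?_)
    (Set.pair_subset hm hn)⟩
  have hl_or : i l = i m ∨ i l = i n := by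
    grind [eq_or_eq_of_mem_u hl, eq_or_eq_of_mem_u hm, eq_or_eq_of_mem_u hn]
  exact hl_or.imp (@hi _ _) (@hi _ _)

theorem exists_uTrace_eq_pair (hsym : ∀ a b, E a b → E b a) (hi : Function.Injective i) {m n : ι}
    (h : E (i m) (i n)) : ∃ p, uTrace E i p = {m, n} := by
  obtain ⟨p, hp⟩ := exists_forall_mem_u_iff_of_adj hsym h
  refine ⟨p, Set.ext fun l => (hp (i l)).trans ?_⟩
  simp only [hi.eq_iff, Set.mem_insert_iff, Set.mem_singleton_iff]

theorem exists_uTrace_eq_of_subsingleton [Finite ι] (hi : Function.Injective i) {T : Set ι}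
    (hT : T.Subsingleton) : ∃ p, uTrace E i p = T := by
  obtain ⟨M, hM⟩ := (Set.finite_range i).bddAbove
  have hlt (l : ι) : i l < M + 1 := Nat.lt_succ_of_le (hM ⟨l, rfl⟩)
  rcases hT.eq_empty_or_singleton with rfl | ⟨n, rfl⟩
  · refine ⟨⟨(M + 1, M + 1), le_refl (M + 1)⟩, Set.ext fun l => mem_u_iff.trans ?_⟩
    simp [(hlt l).ne']
  · refine ⟨⟨(i n, M + 1), (hlt n).le⟩, Set.ext fun l => mem_u_iff.trans ?_⟩
    simp [(hlt l).ne', hi.eq_iff, eq_comm]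

theorem range_uTrace [Finite ι] (hsym : ∀ a b, E a b → E b a) (hi : Function.Injective i) :
    Set.range (uTrace E i) =
      {T | T.Subsingleton ∨ ∃ m n, E (i m) (i n) ∧ T = {m, n}} := by
  refine Set.Subset.antisymm ?_ ?_
  · rintro _ ⟨p, rfl⟩
    exact uTrace_subsingleton_or_eq_pair hsym hi p
  · rintro T (hT | ⟨m, n, hmn, rfl⟩)
    · exact exists_uTrace_eq_of_subsingleton hi hT
    · exact exists_uTrace_eq_pair hsym hi hmn

theorem exists_preimage_u_eq [Finite ι] (hsym : ∀ a b, E a b → E b a)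
    (hsym' : ∀ a b, E' a b → E' b a) (hi : Function.Injective i) (hj : Function.Injective j)
    (hE : ∀ m n, E (i m) (i n) ↔ E' (j m) (j n)) :
    ∃ f : I → I, ∀ l, f ⁻¹' u E (i l) = u E' (j l) := by
  have hrange : Set.range (uTrace E' j) ⊆ Set.range (uTrace E i) := by
    simp only [range_uTrace hsym hi, range_uTrace hsym' hj, hE, subset_rfl]
  obtain ⟨f, hf⟩ := Set.range_subset_range_iff_exists_comp.1 hrange
  exact ⟨f, fun l => Set.ext fun q => (Set.ext_iff.1 (congrFun hf q) l).symm⟩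

end Traces

section Preimages

variable {α β ι : Type*} {f : β → α} {f' : α → β} {U : ι → Set α} {V : ι → Set β}

theorem image_preimage_boolGen_range (hf : ∀ l, f ⁻¹' U l = V l) :
    Set.preimage f '' boolGen (Set.range U) = boolGen (Set.range V) := by
  obtain rfl : Set.preimage f ∘ U = V := funext hf
  rw [Set.range_comp]
  exact image_boolGen (CompleteLatticeHom.setPreimage f : BoundedLatticeHom (Set α) (Set β)) _

theorem leftInvOn_preimage_boolGen_range (hf : ∀ l, f ⁻¹' U l = V l)
    (hf' : ∀ l, f' ⁻¹' V l = U l) :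
    Set.LeftInvOn (Set.preimage f') (Set.preimage f) (boolGen (Set.range U)) := by
  refine leftInvOn_boolGen
    (φ := (CompleteLatticeHom.setPreimage f : BoundedLatticeHom (Set α) (Set β)))
    (ψ := (CompleteLatticeHom.setPreimage f' : BoundedLatticeHom (Set β) (Set α))) ?_
  rintro _ ⟨l, rfl⟩
  exact (congrArg (Set.preimage f') (hf l)).trans (hf' l)

end Preimages

section Keys

variable {E E' : ℕ → ℕ → Prop} {k : ℕ} {i j : Fin k → ℕ} {f f' : I → I}

theorem preimage_keyAtom (hf : ∀ l, f ⁻¹' u E (i l) = u E' (j l))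
    (c : (Fin k × Fin k) ⊕ (Fin k ⊕ Unit)) : f ⁻¹' keyAtom E i c = keyAtom E' j c := by
  rcases c with c | c | c <;>
    simp only [keyAtom, Set.preimage_inter, Set.preimage_sdiff, Set.preimage_compl,
      Set.preimage_iUnion, hf]

theorem keyValid_congr (hE : ∀ m n, E (i m) (i n) ↔ E' (j m) (j n))
    (c : (Fin k × Fin k) ⊕ (Fin k ⊕ Unit)) : keyValid E i c ↔ keyValid E' j c := by
  rcases c with c | c
  · exact and_congr_right fun _ => hE c.1 c.2
  · exact Iff.rfl

theorem atomRel_preimage (hf : ∀ l, f ⁻¹' u E (i l) = u E' (j l))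
    (hE : ∀ m n, E (i m) (i n) ↔ E' (j m) (j n)) {a b : Set I} (h : atomRel E i a b) :
    atomRel E' j (f ⁻¹' a) (f ⁻¹' b) := by
  obtain ⟨p, q, hp, hq, rfl, rfl, hpq⟩ := h
  exact ⟨p, q, (keyValid_congr hE p).1 hp, (keyValid_congr hE q).1 hq,
    (preimage_keyAtom hf p).symm, (preimage_keyAtom hf q).symm, hpq⟩

theorem natOrderOn_preimage_iff (hf : ∀ l, f ⁻¹' u E (i l) = u E' (j l))
    (hf' : ∀ l, f' ⁻¹' u E' (j l) = u E (i l)) (hE : ∀ m n, E (i m) (i n) ↔ E' (j m) (j n))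
    {x y : Set I} (hx : x ∈ boolGen (Set.range fun l => u E (i l)))
    (hy : y ∈ boolGen (Set.range fun l => u E (i l))) :
    natOrderOn (boolGen (Set.range fun l => u E' (j l))) (atomRel E' j) (f ⁻¹' x) (f ⁻¹' y) ↔
      natOrderOn (boolGen (Set.range fun l => u E (i l))) (atomRel E i) x y := by
  have hinv := leftInvOn_preimage_boolGen_range hf hf'
  rw [← image_preimage_boolGen_range hf]
  refine natOrderOn_image_iff (g := Set.preimage f)
    (fun a ha b hb => ⟨fun h => ?_, fun h => Set.preimage_mono h⟩) (bot_mem_boolGen _) rfl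
    (fun a ha b hb => ⟨fun h => ?_, atomRel_preimage hf hE⟩) hx hy
  · rw [← hinv ha, ← hinv hb]
    exact Set.preimage_mono h
  · rw [← hinv ha, ← hinv hb]
    exact atomRel_preimage hf' (fun m n => (hE m n).symm) h

end Keys

theorem ordered_subalgebra_isomorphism_general {E E' : ℕ → ℕ → Prop}
    (hsym : ∀ a b, E a b → E b a) (hsym' : ∀ a b, E' a b → E' b a)
    {k : ℕ} {i j : Fin k → ℕ} (hi : Function.Injective i) (hj : Function.Injective j)
    (hE : ∀ n m : Fin k, E (i n) (i m) ↔ E' (j n) (j m)) :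
    ∃ g : Set I → Set I,
      Set.BijOn g (boolGen (Set.range fun ℓ => u E (i ℓ)))
        (boolGen (Set.range fun ℓ => u E' (j ℓ))) ∧
      (∀ x ∈ boolGen (Set.range fun ℓ => u E (i ℓ)),
        ∀ y ∈ boolGen (Set.range fun ℓ => u E (i ℓ)), g (x ∩ y) = g x ∩ g y) ∧
      (∀ x ∈ boolGen (Set.range fun ℓ => u E (i ℓ)),
        ∀ y ∈ boolGen (Set.range fun ℓ => u E (i ℓ)), g (x ∪ y) = g x ∪ g y) ∧
      (∀ x ∈ boolGen (Set.range fun ℓ => u E (i ℓ)), g xᶜ = (g x)ᶜ) ∧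
      g ∅ = ∅ ∧ g Set.univ = Set.univ ∧
      (∀ ℓ : Fin k, g (u E (i ℓ)) = u E' (j ℓ)) ∧
      (∀ x ∈ boolGen (Set.range fun ℓ => u E (i ℓ)),
        ∀ y ∈ boolGen (Set.range fun ℓ => u E (i ℓ)),
          (natOrderOn (boolGen (Set.range fun ℓ => u E (i ℓ))) (atomRel E i) x y ↔
            natOrderOn (boolGen (Set.range fun ℓ => u E' (j ℓ))) (atomRel E' j) (g x) (g y))) := by
  obtain ⟨f, hf⟩ := exists_preimage_u_eq hsym hsym' hi hj hE
  obtain ⟨f', hf'⟩ := exists_preimage_u_eq hsym' hsym hj hi fun n m => (hE n m).symm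
  refine ⟨Set.preimage f, ?_, fun _ _ _ _ => rfl, fun _ _ _ _ => rfl, fun _ _ => rfl, rfl, rfl, hf,
    fun x hx y hy => (natOrderOn_preimage_iff hf hf' hE hx hy).symm⟩
  rw [← image_preimage_boolGen_range hf]
  exact (leftInvOn_preimage_boolGen_range hf hf').injOn.bijOn_image

/-- Let `≺` be a linear order on `ℕ`, and let `(i 1, …, i k)` and `(j 1, …, j k)` be tuples of
pairwise distinct natural numbers, both increasing with respect to `≺`, inducing the same graph
`E` on positions. Then there is an isomorphism `g` of Boolean algebras from the Boolean
subalgebra `B` of `Set I` generated by `{u (i 1), …, u (i k)}` onto the subalgebra `B'`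
generated by `{u (j 1), …, u (j k)}` with `g (u (i ℓ)) = u (j ℓ)` for all `ℓ`, which is
moreover an order isomorphism for the natural orders on `B` and `B'` induced by the described
orders on their atoms. -/
theorem ordered_subalgebra_isomorphism (E : ℕ → ℕ → Prop)
    (hsym : ∀ a b, E a b → E b a) (hirr : ∀ a, ¬ E a a)
    (prec : ℕ → ℕ → Prop) (hprec : IsLinearOrder ℕ prec)
    (k : ℕ) (i j : Fin k → ℕ)
    (hi : Function.Injective i) (hj : Function.Injective j)
    (hichain : ∀ n m : Fin k, n < m → prec (i n) (i m))
    (hjchain : ∀ n m : Fin k, n < m → prec (j n) (j m))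
    (hE : ∀ n m : Fin k, E (i n) (i m) ↔ E (j n) (j m)) :
    ∃ g : Set I → Set I,
      Set.BijOn g (boolGen (Set.range fun ℓ => u E (i ℓ)))
        (boolGen (Set.range fun ℓ => u E (j ℓ))) ∧
      (∀ x ∈ boolGen (Set.range fun ℓ => u E (i ℓ)),
        ∀ y ∈ boolGen (Set.range fun ℓ => u E (i ℓ)), g (x ∩ y) = g x ∩ g y) ∧
      (∀ x ∈ boolGen (Set.range fun ℓ => u E (i ℓ)),
        ∀ y ∈ boolGen (Set.range fun ℓ => u E (i ℓ)), g (x ∪ y) = g x ∪ g y) ∧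
      (∀ x ∈ boolGen (Set.range fun ℓ => u E (i ℓ)), g xᶜ = (g x)ᶜ) ∧
      g ∅ = ∅ ∧ g Set.univ = Set.univ ∧
      (∀ ℓ : Fin k, g (u E (i ℓ)) = u E (j ℓ)) ∧
      (∀ x ∈ boolGen (Set.range fun ℓ => u E (i ℓ)),
        ∀ y ∈ boolGen (Set.range fun ℓ => u E (i ℓ)),
          (natOrderOn (boolGen (Set.range fun ℓ => u E (i ℓ))) (atomRel E i) x y ↔
            natOrderOn (boolGen (Set.range fun ℓ => u E (j ℓ))) (atomRel E j) (g x) (g y))) :=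
  ordered_subalgebra_isomorphism_general hsym hsym hi hj hE
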